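/- Let p be a prime and n ≥ 1, let G = Hr_p(ℤ/p^nℤ), and let Irr(G) be a complete set of pairwise non-isomorphic irreducible complex representations of G, with d_π the degree of π. Then (1/|G|) · Σ_{π ∈ Irr(G)} (d_π)³ = p − 1 + 1/p (an identity of rational numbers). -/

import Mathlib

/-- The Heisenberg group over a commutative unital ring `S`: the underlying set is
`S × S × S` with multiplication `(x,y,z)·(x',y',z') = (x+x', y+y', z+xy'+z')`. -/
@[ext]
structure Heis (S : Type*) [CommRing S] where
  x : S
  y : S
  z : S

namespace Heis

variable {S : Type*} [CommRing S]

instance : Mul (Heis S) := ⟨fun a b => ⟨a.x + b.x, a.y + b.y, a.z + a.x * b.y + b.z⟩⟩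
instance : One (Heis S) := ⟨⟨0, 0, 0⟩⟩
instance : Inv (Heis S) := ⟨fun a => ⟨-a.x, -a.y, a.x * a.y - a.z⟩⟩

@[simp] lemma mul_x (a b : Heis S) : (a * b).x = a.x + b.x := rfl
@[simp] lemma mul_y (a b : Heis S) : (a * b).y = a.y + b.y := rfl
@[simp] lemma mul_z (a b : Heis S) : (a * b).z = a.z + a.x * b.y + b.z := rfl
@[simp] lemma one_x : (1 : Heis S).x = 0 := rfl
@[simp] lemma one_y : (1 : Heis S).y = 0 := rfl
@[simp] lemma one_z : (1 : Heis S).z = 0 := rfl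
@[simp] lemma inv_x (a : Heis S) : a⁻¹.x = -a.x := rfl
@[simp] lemma inv_y (a : Heis S) : a⁻¹.y = -a.y := rfl
@[simp] lemma inv_z (a : Heis S) : a⁻¹.z = a.x * a.y - a.z := rfl

instance : Group (Heis S) where
  mul_assoc a b c := by ext <;> simp <;> ring
  one_mul a := by ext <;> simp
  mul_one a := by ext <;> simp
  inv_mul_cancel a := by ext <;> simp <;> ring

end Heis

/-- The central subgroup `{(0,0,ps) : s ∈ S}` of the Heisenberg group `H(S)`. -/
def pCenter (p : ℕ) (S : Type*) [CommRing S] : Subgroup (Heis S) where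
  carrier := {a | a.x = 0 ∧ a.y = 0 ∧ ∃ s : S, a.z = p * s}
  mul_mem' := by
    rintro a b ⟨hax, hay, s, hs⟩ ⟨hbx, hby, t, ht⟩
    refine ⟨by rw [Heis.mul_x, hax, hbx, add_zero],
      by rw [Heis.mul_y, hay, hby, add_zero], s + t, ?_⟩
    rw [Heis.mul_z, hs, ht, hax]; ring
  one_mem' := ⟨rfl, rfl, 0, by simp⟩
  inv_mem' := by
    rintro a ⟨hax, hay, s, hs⟩
    exact ⟨by rw [Heis.inv_x, hax, neg_zero], by rw [Heis.inv_y, hay, neg_zero],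
      -s, by rw [Heis.inv_z, hax, hs]; ring⟩

instance pCenter.normal (p : ℕ) (S : Type*) [CommRing S] : (pCenter p S).Normal := by
  constructor
  intro n hn g
  obtain ⟨hx, hy, hz⟩ := hn
  have hgn : g * n * g⁻¹ = n := by ext <;> simp [hx, hy] <;> ring
  rw [hgn]; exact ⟨hx, hy, hz⟩

/-- The `p`-reduced Heisenberg group over `S`: the quotient of `H(S)` by the central
subgroup `{(0,0,ps) : s ∈ S}`. -/
abbrev HrP (p : ℕ) (S : Type*) [CommRing S] : Type _ := Heis S ⧸ pCenter p S

/-- The subgroup `{(0,0,s) : s ∈ S}` of `H(S)`. -/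
def zSubgroup (S : Type*) [CommRing S] : Subgroup (Heis S) where
  carrier := {a | a.x = 0 ∧ a.y = 0}
  mul_mem' := by
    rintro a b ⟨hax, hay⟩ ⟨hbx, hby⟩
    exact ⟨by rw [Heis.mul_x, hax, hbx, add_zero], by rw [Heis.mul_y, hay, hby, add_zero]⟩
  one_mem' := ⟨rfl, rfl⟩
  inv_mem' := by
    rintro a ⟨hax, hay⟩
    exact ⟨by rw [Heis.inv_x, hax, neg_zero], by rw [Heis.inv_y, hay, neg_zero]⟩

/-- The subgroup `K = {(0,0,[s]) : s ∈ S}` of the `p`-reduced Heisenberg group `Hr_p(S)`. -/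
def Ksub (p : ℕ) (S : Type*) [CommRing S] : Subgroup (HrP p S) :=
  (zSubgroup S).map (QuotientGroup.mk' (pCenter p S))

instance Ksub.normal (p : ℕ) (S : Type*) [CommRing S] : (Ksub p S).Normal := by
  constructor
  intro n hn g
  obtain ⟨a, ⟨hax, hay⟩, rfl⟩ := hn
  obtain ⟨b, rfl⟩ := QuotientGroup.mk'_surjective (pCenter p S) g
  refine ⟨b * a * b⁻¹, ⟨?_, ?_⟩, by simp⟩
  · simp [hax]
  · simp [hay]

/-! On an irreducible representation `ρ` of a finite group `G` whose commutator subgroup `G'` is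
central of prime order, `G'` acts either trivially or faithfully. If trivially, the operators `ρ g`
commute and `ρ` is one-dimensional. If faithfully, a non-central `g` is conjugate to `⁅x, g⁆ * g`,
where `⁅x, g⁆` acts by a scalar different from `1`, so the character vanishes at `g`, and character
orthogonality gives `d ^ 2 = [G : Z(G)]`.

If `[G : Z(G)] = m ^ 2`, then every degree satisfies `d ^ 3 = m * d ^ 2 - (m - 1) * [d = 1]`. As
`∑ d ^ 2 = |G|` and there are `[G : G']` one-dimensional representations, the average of `d ^ 3` is
`m - (m - 1) / |G'|`. For `Hr_p(S)` with `|S / pS| = q` prime one has `|G'| = q` and `m = q`. -/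

section Schur

open Module Representation

variable {k G V : Type*} [Field k] [IsAlgClosed k] [Monoid G] [AddCommGroup V] [Module k V]
  [FiniteDimensional k V] (ρ : Representation k G V) [ρ.IsIrreducible]

theorem exists_eq_smul_one_of_forall_commute {T : End k V}
    (hT : ∀ g, Commute T (ρ g)) : ∃ t : k, T = t • 1 := by
  let φ : IntertwiningMap ρ ρ :=
    T.intertwiningMap_of_isIntertwiningMap ρ ρ fun g v ↦ LinearMap.congr_fun (hT g) v
  obtain ⟨t, ht⟩ :=
    (IsIrreducible.algebraMap_intertwiningMap_bijective_of_isAlgClosed (ρ := ρ)).2 φ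
  exact ⟨t, congrArg IntertwiningMap.toLinearMap ht.symm⟩

theorem finrank_eq_one_of_forall_commute (hρ : ∀ g h, Commute (ρ g) (ρ h)) : finrank k V = 1 := by
  have hscalar (T : End k V) : ∃ t : k, T = t • 1 :=
    exists_eq_smul_one_of_forall_commute ρ fun g ↦ by
      obtain ⟨s, hs⟩ := exists_eq_smul_one_of_forall_commute ρ (hρ g)
      rw [hs]
      exact (Commute.one_right T).smul_right s
  have : Nontrivial V := IsSimpleModule.nontrivial (MonoidAlgebra k G) ρ.asModule
  have hEnd : finrank k (End k V) = 1 :=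
    finrank_eq_one 1 one_ne_zero fun T ↦ (hscalar T).imp fun _ ↦ Eq.symm
  exact Nat.eq_one_of_mul_eq_one_left ((finrank_linearMap k k V V).symm.trans hEnd)

end Schur

section Irreducible

open Module Representation
open scoped commutatorElement

variable {k G V : Type*} [Field k] [Group G] [AddCommGroup V] [Module k V]
  [FiniteDimensional k V] (ρ : Representation k G V)

theorem character_mul_character_inv_of_apply_eq_smul_one {g : G} {t : k} (ht : ρ g = t • 1) :
    ρ.character g * ρ.character g⁻¹ = (finrank k V : k) ^ 2 := calc
  ρ.character g * ρ.character g⁻¹ = finrank k V * (t * ρ.character g⁻¹) := by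
    rw [character, ht, map_smul, LinearMap.trace_one, smul_eq_mul]
    ring
  _ = finrank k V * ρ.character (g * g⁻¹) := by
    rw [character, character, map_mul, ht, smul_mul_assoc, one_mul, map_smul, smul_eq_mul]
  _ = (finrank k V : k) ^ 2 := by rw [mul_inv_cancel, char_one, sq]

variable [IsAlgClosed k] [ρ.IsIrreducible]

theorem exists_apply_eq_smul_one_of_mem_center {z : G} (hz : z ∈ Subgroup.center G) :
    ∃ t : k, ρ z = t • 1 :=
  exists_eq_smul_one_of_forall_commute ρ fun g ↦
    Commute.map (Subgroup.mem_center_iff.1 hz g).symm ρ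

theorem character_eq_zero_of_apply_commutator_ne_one {g x : G}
    (hz : ⁅x, g⁆ ∈ Subgroup.center G) (hne : ρ ⁅x, g⁆ ≠ 1) : ρ.character g = 0 := by
  obtain ⟨t, ht⟩ := exists_apply_eq_smul_one_of_mem_center ρ hz
  have ht1 : t ≠ 1 := by
    rintro rfl
    exact hne (by rw [ht, one_smul])
  have htrace : t * ρ.character g = ρ.character g := calc
    t * ρ.character g = ρ.character (⁅x, g⁆ * g) := by
      rw [character, character, map_mul, ht, smul_mul_assoc, one_mul, map_smul, smul_eq_mul]
    _ = ρ.character (x * g * x⁻¹) := by rw [commutatorElement_def, inv_mul_cancel_right]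
    _ = ρ.character g := ρ.char_conj g x
  exact (mul_left_eq_self₀.1 htrace).resolve_left ht1

variable [CharZero k] [Finite G]

theorem finrank_sq_eq_index (H : Subgroup G)
    (hscalar : ∀ h ∈ H, ∃ t : k, ρ h = t • 1) (hvanish : ∀ g ∉ H, ρ.character g = 0) :
    finrank k V ^ 2 = H.index := by
  classical
  have := Fintype.ofFinite G
  have hG : (Nat.card G : k) ≠ 0 := Nat.cast_ne_zero.2 Nat.card_pos.ne'
  have := invertibleOfNonzero hG
  have hterm (g : G) :
      ρ.character g * ρ.character g⁻¹ = if g ∈ H then (finrank k V : k) ^ 2 else 0 := by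
    split_ifs with hg
    · obtain ⟨t, ht⟩ := hscalar g hg
      exact character_mul_character_inv_of_apply_eq_smul_one ρ ht
    · rw [hvanish g hg, zero_mul]
  have hsum : Nat.card H * (finrank k V : k) ^ 2 = Nat.card G := calc
    _ = ∑ g, ρ.character g * ρ.character g⁻¹ := by
      simp [hterm, Finset.sum_ite, Fintype.card_subtype]
    _ = Nat.card G := by
      have h := char_orthonormal ρ ρ
      rw [if_pos ⟨.refl ρ⟩] at h
      rw [← mul_one (Nat.card G : k), ← h, mul_inv_cancel_left₀ hG]
  refine Nat.eq_of_mul_eq_mul_left (Nat.card_pos (α := H)) ?_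
  rw [H.card_mul_index]
  exact_mod_cast hsum

theorem finrank_sq_eq_index_center (hle : commutator G ≤ Subgroup.center G)
    (hρ : Disjoint (commutator G) (MonoidHom.ker ρ)) :
    finrank k V ^ 2 = (Subgroup.center G).index := by
  refine finrank_sq_eq_index ρ _ (fun z hz ↦ exists_apply_eq_smul_one_of_mem_center ρ hz)
    fun g hg ↦ ?_
  obtain ⟨x, hx⟩ : ∃ x, ⁅x, g⁆ ≠ 1 := by
    by_contra! h
    exact hg (Subgroup.mem_center_iff.2 fun x ↦ commutatorElement_eq_one_iff_mul_comm.1 (h x))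
  have hmem : ⁅x, g⁆ ∈ commutator G :=
    Subgroup.commutator_mem_commutator (Subgroup.mem_top x) (Subgroup.mem_top g)
  exact character_eq_zero_of_apply_commutator_ne_one ρ (hle hmem) fun h1 ↦
    hx (Subgroup.disjoint_def.1 hρ hmem h1)

include ρ in
theorem finrank_eq_one_or_finrank_sq_eq_index_center_of_isIrreducible
    (hle : commutator G ≤ Subgroup.center G) (hcard : (Nat.card (commutator G)).Prime) :
    finrank k V = 1 ∨ finrank k V ^ 2 = (Subgroup.center G).index := by
  have := Fact.mk hcard
  rcases ((MonoidHom.ker ρ).subgroupOf (commutator G)).eq_bot_or_eq_top_of_prime_card with h | h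
  · exact .inr (finrank_sq_eq_index_center ρ hle (Subgroup.subgroupOf_eq_bot.1 h).symm)
  · refine .inl (finrank_eq_one_of_forall_commute ρ fun g x ↦ ?_)
    have hker : ρ ⁅g, x⁆ = 1 := Subgroup.subgroupOf_eq_top.1 h
      (Subgroup.commutator_mem_commutator (Subgroup.mem_top g) (Subgroup.mem_top x))
    calc ρ g * ρ x = ρ (⁅g, x⁆ * (x * g)) := by
          rw [← map_mul, commutatorElement_def]; group
      _ = ρ x * ρ g := by rw [map_mul, hker, one_mul, map_mul]

end Irreducible

section SimpleModules

open Module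

/-- A family `V` of `R`-modules is a *complete family of simple modules* if it contains each
isomorphism class of simple `R`-modules exactly once. For exhaustion only the minimal left ideals
of `R` are tested, which is enough when `R` is semisimple and avoids quantifying over modules in
some universe. -/
structure IsCompleteSimpleFamily (R : Type*) [Ring R] {ι : Type*} (V : ι → Type*)
    [∀ i, AddCommGroup (V i)] [∀ i, Module R (V i)] : Prop where
  isSimpleModule (i : ι) : IsSimpleModule R (V i)
  eq_of_linearEquiv (i j : ι) : Nonempty (V i ≃ₗ[R] V j) → i = j
  exists_linearEquiv (I : Submodule R R) : IsSimpleModule R I → ∃ i, Nonempty (I ≃ₗ[R] V i)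

namespace IsCompleteSimpleFamily

section Ring

variable {R ι : Type*} [Ring R] {V : ι → Type*} [∀ i, AddCommGroup (V i)] [∀ i, Module R (V i)]

theorem exists_linearEquiv_of_isSimpleModule [IsSemisimpleRing R]
    (hV : IsCompleteSimpleFamily R V) (M : Type*) [AddCommGroup M] [Module R M]
    [IsSimpleModule R M] : ∃ i, Nonempty (M ≃ₗ[R] V i) := by
  obtain ⟨I, ⟨e⟩⟩ := IsSemisimpleRing.exists_linearEquiv_ideal_of_isSimpleModule R M
  obtain ⟨i, ⟨f⟩⟩ := hV.exists_linearEquiv I (IsSimpleModule.congr e.symm)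
  exact ⟨i, ⟨e.trans f⟩⟩

theorem finiteDimensional (hV : IsCompleteSimpleFamily R V) (k : Type*) [Field k] [Algebra k R]
    [FiniteDimensional k R] [∀ i, Module k (V i)] [∀ i, IsScalarTower k R (V i)] (i : ι) :
    FiniteDimensional k (V i) :=
  have := hV.isSimpleModule i
  Module.Finite.trans R (V i)

end Ring

variable {k R ι : Type*} [Field k] [Ring R] [Algebra k R] [FiniteDimensional k R]
  {V : ι → Type*} [∀ i, AddCommGroup (V i)] [∀ i, Module R (V i)] [∀ i, Module k (V i)]
  [∀ i, IsScalarTower k R (V i)]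

theorem finrank_linearMap [IsAlgClosed k] [DecidableEq ι] (hV : IsCompleteSimpleFamily R V)
    (i j : ι) : finrank k (V i →ₗ[R] V j) = if i = j then 1 else 0 := by
  have := hV.isSimpleModule
  have := hV.finiteDimensional k
  split_ifs with h
  · subst h
    exact (LinearEquiv.ofBijective (Algebra.linearMap k (End R (V i)))
      (IsSimpleModule.algebraMap_end_bijective_of_isAlgClosed k)).finrank_eq.symm.trans
        (finrank_self k)
  · have : Subsingleton (V i →ₗ[R] V j) := subsingleton_of_forall_eq 0 fun φ ↦
      φ.bijective_or_eq_zero.resolve_left fun hφ ↦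
        h (hV.eq_of_linearEquiv i j ⟨LinearEquiv.ofBijective φ hφ⟩)
    exact finrank_zero_of_subsingleton

variable [Fintype ι] [IsAlgClosed k] [IsSemisimpleRing R]

theorem finrank_eq_sum_of_isSimpleModule (hV : IsCompleteSimpleFamily R V) (M : Type*)
    [AddCommGroup M] [Module R M] [Module k M] [IsScalarTower k R M] [IsSimpleModule R M] :
    finrank k M = ∑ i, finrank k (M →ₗ[R] V i) * finrank k (V i) := by
  classical
  obtain ⟨i, ⟨e⟩⟩ := hV.exists_linearEquiv_of_isSimpleModule M
  have hhom (j : ι) : finrank k (M →ₗ[R] V j) = if i = j then 1 else 0 :=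
    ((LinearEquiv.congrLeft (V j) k e).finrank_eq).trans (hV.finrank_linearMap i j)
  simp only [hhom, ite_mul, one_mul, zero_mul, Finset.sum_ite_eq, Finset.mem_univ, if_true]
  exact (e.restrictScalars k).finrank_eq

theorem finrank_eq_sum (hV : IsCompleteSimpleFamily R V) (M : Type*)
    [AddCommGroup M] [Module R M] [Module k M] [IsScalarTower k R M] [Module.Finite R M] :
    finrank k M = ∑ i, finrank k (M →ₗ[R] V i) * finrank k (V i) := by
  obtain ⟨n, S, e, hS⟩ := IsSemisimpleModule.exists_linearEquiv_fin_dfinsupp R M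
  let f : M ≃ₗ[R] ∀ j, S j := e.trans (DFinsupp.linearEquivFunOnFintype (R := R) (M := (S ·)))
  have hVfin := hV.finiteDimensional k
  have := Module.Finite.trans (R := k) R M
  have hSfin (j : Fin n) : FiniteDimensional k (S j) :=
    Module.Finite.of_injective ((S j).subtype.restrictScalars k) Subtype.val_injective
  have hhomfin (j : Fin n) (i : ι) : Module.Finite k (S j →ₗ[R] V i) :=
    Module.Finite.of_injective (LinearMap.restrictScalarsₗ k R (S j) (V i) k)
      (LinearMap.restrictScalars_injective k)
  have hhom (i : ι) : finrank k (M →ₗ[R] V i) = ∑ j, finrank k (S j →ₗ[R] V i) := by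
    rw [(LinearEquiv.congrLeft (V i) k f).finrank_eq,
      ← (LinearMap.lsum R (fun j ↦ S j) k (M := V i)).finrank_eq, finrank_pi_fintype]
  calc finrank k M = ∑ j, finrank k (S j) := by
        rw [(f.restrictScalars k).finrank_eq, finrank_pi_fintype]
    _ = ∑ j, ∑ i, finrank k (S j →ₗ[R] V i) * finrank k (V i) :=
        Finset.sum_congr rfl fun j _ ↦ hV.finrank_eq_sum_of_isSimpleModule (S j)
    _ = ∑ i, finrank k (M →ₗ[R] V i) * finrank k (V i) := by
        rw [Finset.sum_comm]
        exact Finset.sum_congr rfl fun i _ ↦ by rw [hhom, Finset.sum_mul]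

theorem sum_finrank_sq (hV : IsCompleteSimpleFamily R V) :
    ∑ i, finrank k (V i) ^ 2 = finrank k R := by
  simp only [hV.finrank_eq_sum (k := k) R, (LinearMap.ringLmapEquivSelf R k (V _)).finrank_eq, sq]

end IsCompleteSimpleFamily

section OneDimensional

variable {k R : Type*} [Field k] [Ring R] [Algebra k R]

theorem exists_algHom_of_finrank_eq_one {V : Type*} [AddCommGroup V] [Module R V] [Module k V]
    [IsScalarTower k R V] (hV : finrank k V = 1) :
    ∃ χ : R →ₐ[k] k, ∀ (r : R) (v : V), r • v = χ r • v := by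
  have := Module.finite_of_finrank_eq_succ hV
  have hbij : Function.Bijective (Algebra.ofId k (End k V)) :=
    Algebra.finrank_eq_one_iff_bijective_algebraMap.1 <| by rw [finrank_linearMap, hV]
  let e := AlgEquiv.ofBijective (Algebra.ofId k (End k V)) hbij
  exact ⟨(e.symm : End k V →ₐ[k] k).comp (Algebra.lsmul k k V), fun r v ↦
    (LinearMap.congr_fun (e.apply_symm_apply (Algebra.lsmul k k V r)) v).symm⟩

variable [IsSemisimpleRing R] {ι : Type*} {V : ι → Type*} [∀ i, AddCommGroup (V i)]
  [∀ i, Module R (V i)] [∀ i, Module k (V i)] [∀ i, IsScalarTower k R (V i)]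

theorem IsCompleteSimpleFamily.exists_finrank_eq_one_and_forall_smul_eq
    (hV : IsCompleteSimpleFamily R V) (χ : R →ₐ[k] k) :
    ∃ i, finrank k (V i) = 1 ∧ ∀ (r : R) (v : V i), r • v = χ r • v := by
  let : Module R k := Module.compHom k χ.toRingHom
  have hsmul (r : R) (a : k) : r • a = χ r • a := rfl
  have : IsScalarTower k R k := ⟨fun c r a ↦ by rw [hsmul, hsmul, map_smul, smul_assoc]⟩
  have : IsSimpleModule R k :=
    (isSimpleModule_iff _ _).2 (is_simple_module_of_finrank_eq_one (K := k) (finrank_self k))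
  obtain ⟨i, ⟨e⟩⟩ := hV.exists_linearEquiv_of_isSimpleModule k
  refine ⟨i, (e.restrictScalars k).finrank_eq.symm.trans (finrank_self k), fun r v ↦ ?_⟩
  obtain ⟨a, rfl⟩ := e.surjective v
  rw [← map_smul, hsmul]
  exact (e.restrictScalars k).map_smul (χ r) a

theorem IsCompleteSimpleFamily.card_finrank_eq_one (hV : IsCompleteSimpleFamily R V) :
    Nat.card {i // finrank k (V i) = 1} = Nat.card (R →ₐ[k] k) := by
  choose χ hχ using fun i : {i // finrank k (V i) = 1} ↦
    exists_algHom_of_finrank_eq_one (R := R) i.2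
  refine Nat.card_congr (Equiv.ofBijective χ ⟨fun i j hij ↦ ?_, fun ψ ↦ ?_⟩)
  · have := Module.finite_of_finrank_eq_succ i.2
    have := Module.finite_of_finrank_eq_succ j.2
    let e : V i ≃ₗ[k] V j := LinearEquiv.ofFinrankEq _ _ (i.2.trans j.2.symm)
    have he (r : R) (v : V i) : e (r • v) = r • e v := by rw [hχ, hχ, map_smul, hij]
    exact Subtype.ext (hV.eq_of_linearEquiv _ _ ⟨{ e with map_smul' := he }⟩)
  · obtain ⟨i, hi, hψ⟩ := hV.exists_finrank_eq_one_and_forall_smul_eq ψ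
    have : Nontrivial (V i) := nontrivial_of_finrank_eq_succ hi
    obtain ⟨v, hv⟩ := exists_ne (0 : V i)
    exact ⟨⟨i, hi⟩, AlgHom.ext fun r ↦
      smul_left_injective k hv ((hχ ⟨i, hi⟩ r v).symm.trans (hψ r v))⟩

end OneDimensional

end SimpleModules

section GroupAlgebra

open Module
open scoped MonoidAlgebra

theorem isIrreducible_ofModule' {k G V : Type*} [Field k] [Monoid G] [AddCommGroup V] [Module k V]
    [Module k[G] V] [IsScalarTower k k[G] V] [IsSimpleModule k[G] V] :
    (Representation.ofModule' V : Representation k G V).IsIrreducible := by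
  let ρ : Representation k G V := Representation.ofModule' V
  have hρ : ρ.asAlgebraHom = Algebra.lsmul k k V := Equiv.apply_symm_apply _ _
  let e : ρ.asModule ≃ₗ[k[G]] V :=
    { ρ.asModuleEquiv with
      map_smul' := fun r v ↦ LinearMap.congr_fun (AlgHom.congr_fun hρ r) (ρ.asModuleEquiv v) }
  exact ρ.irreducible_iff_isSimpleModule_asModule.2 (IsSimpleModule.congr e)

theorem card_algHom_monoidAlgebra_eq_index_commutator (k G : Type*) [Field k] [IsAlgClosed k]
    [CharZero k] [Group G] [Finite G] : Nat.card (k[G] →ₐ[k] k) = (commutator G).index := calc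
  Nat.card (k[G] →ₐ[k] k) = Nat.card (G →* k) := Nat.card_congr (MonoidAlgebra.lift k k G).symm
  _ = Nat.card (G →* kˣ) := Nat.card_congr MonoidHom.toHomUnitsMulEquiv.toEquiv
  _ = Nat.card (Abelianization G →* kˣ) := Nat.card_congr Abelianization.lift
  _ = Nat.card (Abelianization G) := CommGroup.card_monoidHom_of_hasEnoughRootsOfUnity _ _
  _ = (commutator G).index := rfl

namespace IsCompleteSimpleFamily

variable {k G ι : Type*} [Field k] [IsAlgClosed k] [CharZero k] [Group G] [Finite G]
  {V : ι → Type*} [∀ i, AddCommGroup (V i)] [∀ i, Module k[G] (V i)] [∀ i, Module k (V i)]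
  [∀ i, IsScalarTower k k[G] (V i)]

theorem card_finrank_eq_one_eq_index_commutator (hV : IsCompleteSimpleFamily k[G] V) :
    Nat.card {i // finrank k (V i) = 1} = (commutator G).index := by
  have : NeZero (Nat.card G : k) := ⟨Nat.cast_ne_zero.2 Nat.card_pos.ne'⟩
  rw [hV.card_finrank_eq_one, card_algHom_monoidAlgebra_eq_index_commutator]

theorem finrank_eq_one_or_finrank_sq_eq_index_center (hV : IsCompleteSimpleFamily k[G] V)
    (hle : commutator G ≤ Subgroup.center G) (hcard : (Nat.card (commutator G)).Prime) (i : ι) :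
    finrank k (V i) = 1 ∨ finrank k (V i) ^ 2 = (Subgroup.center G).index := by
  have : FiniteDimensional k k[G] := Module.Finite.equiv (MonoidAlgebra.coeffLinearEquiv k).symm
  have := hV.isSimpleModule i
  have := hV.finiteDimensional k i
  have := isIrreducible_ofModule' (k := k) (G := G) (V := V i)
  exact finrank_eq_one_or_finrank_sq_eq_index_center_of_isIrreducible
    (Representation.ofModule' (V i) : Representation k G (V i)) hle hcard

variable [Fintype ι]

theorem sum_finrank_sq_eq_card (hV : IsCompleteSimpleFamily k[G] V) :
    ∑ i, finrank k (V i) ^ 2 = Nat.card G := by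
  have := Fintype.ofFinite G
  have : NeZero (Nat.card G : k) := ⟨Nat.cast_ne_zero.2 Nat.card_pos.ne'⟩
  have : FiniteDimensional k k[G] := Module.Finite.equiv (MonoidAlgebra.coeffLinearEquiv k).symm
  rw [hV.sum_finrank_sq, (MonoidAlgebra.coeffLinearEquiv k).finrank_eq, finrank_finsupp_self,
    Nat.card_eq_fintype_card]

theorem sum_finrank_pow_three (hV : IsCompleteSimpleFamily k[G] V)
    (hle : commutator G ≤ Subgroup.center G) (hcard : (Nat.card (commutator G)).Prime) {m : ℕ}
    (hm : (Subgroup.center G).index = m ^ 2) :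
    (1 / Nat.card G : ℚ) * ∑ i, (finrank k (V i) : ℚ) ^ 3 =
      m - (m - 1) / Nat.card (commutator G) := by
  have hcube (i : ι) : (finrank k (V i) : ℚ) ^ 3 =
      m * (finrank k (V i) : ℚ) ^ 2 - (m - 1) * if finrank k (V i) = 1 then 1 else 0 := by
    rcases hV.finrank_eq_one_or_finrank_sq_eq_index_center hle hcard i with h | h
    · simp [h]
    · rw [hm, Nat.pow_left_inj two_ne_zero] at h
      rw [h]
      split_ifs with h1
      · simp [h1]
      · ring
  have hsq : ∑ i, (finrank k (V i) : ℚ) ^ 2 = Nat.card G := by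
    exact_mod_cast hV.sum_finrank_sq_eq_card
  have hone : ∑ i, (if finrank k (V i) = 1 then 1 else 0 : ℚ) = (commutator G).index := by
    rw [← hV.card_finrank_eq_one_eq_index_commutator]
    simp [Fintype.card_subtype]
  have hG : (Nat.card (commutator G) : ℚ) * (commutator G).index = Nat.card G := by
    exact_mod_cast (commutator G).card_mul_index
  have hq : (Nat.card (commutator G) : ℚ) ≠ 0 := Nat.cast_ne_zero.2 hcard.ne_zero
  have hindex : ((commutator G).index : ℚ) ≠ 0 :=
    Nat.cast_ne_zero.2 Subgroup.index_ne_zero_of_finite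
  simp only [hcube, Finset.sum_sub_distrib, ← Finset.mul_sum, hsq, hone]
  rw [← hG]
  field_simp

end IsCompleteSimpleFamily

end GroupAlgebra

namespace Heis

variable {S : Type*} [CommRing S]

instance [Finite S] : Finite (Heis S) :=
  Finite.of_injective (fun a ↦ (a.x, a.y, a.z)) fun a b h ↦ by
    simp only [Prod.mk.injEq] at h
    exact Heis.ext h.1 h.2.1 h.2.2

open scoped commutatorElement

theorem commutatorElement_eq (a b : Heis S) : ⁅a, b⁆ = ⟨0, 0, a.x * b.y - b.x * a.y⟩ := by
  rw [commutatorElement_def]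
  ext <;> simp only [mul_x, mul_y, mul_z, inv_x, inv_y, inv_z] <;> ring

theorem commutator_eq_zSubgroup : commutator (Heis S) = zSubgroup S := by
  refine le_antisymm (Subgroup.commutator_le.2 fun a _ b _ ↦ ?_) fun c hc ↦ ?_
  · rw [commutatorElement_eq]
    exact ⟨rfl, rfl⟩
  · have hcomm : ⁅(⟨1, 0, 0⟩ : Heis S), ⟨0, c.z, 0⟩⁆ = c := by
      rw [commutatorElement_eq]
      ext
      · exact hc.1.symm
      · exact hc.2.symm
      · simp
    rw [← hcomm]
    exact Subgroup.commutator_mem_commutator (Subgroup.mem_top _) (Subgroup.mem_top _)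

theorem mk_zero_zero_mem_pCenter {p : ℕ} {z : S} :
    (⟨0, 0, z⟩ : Heis S) ∈ pCenter p S ↔ z ∈ Ideal.span {(p : S)} := by
  rw [Ideal.mem_span_singleton]
  exact ⟨fun h ↦ h.2.2, fun h ↦ ⟨rfl, rfl, h⟩⟩

end Heis

namespace HrP

open scoped commutatorElement

variable (p : ℕ) (S : Type*) [CommRing S]

theorem commutator_eq_Ksub : commutator (HrP p S) = Ksub p S := by
  rw [Ksub, ← Heis.commutator_eq_zSubgroup, commutator_def, commutator_def,
    Subgroup.map_commutator, Subgroup.map_top_of_surjective _ (QuotientGroup.mk'_surjective _)]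

variable {p S} in
theorem mk_mem_center_iff {a : Heis S} : (QuotientGroup.mk a : HrP p S) ∈ Subgroup.center _ ↔
    a.x ∈ Ideal.span {(p : S)} ∧ a.y ∈ Ideal.span {(p : S)} := by
  have hcomm (b : Heis S) : (b * a : HrP p S) = a * b ↔
      b.x * a.y - a.x * b.y ∈ Ideal.span {(p : S)} := by
    rw [← commutatorElement_eq_one_iff_mul_comm, ← Heis.mk_zero_zero_mem_pCenter,
      ← Heis.commutatorElement_eq, ← QuotientGroup.eq_one_iff]
    rfl
  rw [Subgroup.mem_center_iff, QuotientGroup.forall_mk]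
  simp only [hcomm]
  refine ⟨fun h ↦ ⟨?_, ?_⟩, fun h b ↦
    sub_mem (Ideal.mul_mem_left _ _ h.2) (Ideal.mul_mem_right _ _ h.1)⟩
  · simpa using h ⟨0, 1, 0⟩
  · simpa using h ⟨1, 0, 0⟩

theorem commutator_le_center : commutator (HrP p S) ≤ Subgroup.center (HrP p S) := by
  rw [commutator_eq_Ksub]
  rintro _ ⟨a, ⟨hx, hy⟩, rfl⟩
  refine mk_mem_center_iff.2 ?_
  rw [hx, hy]
  exact ⟨zero_mem _, zero_mem _⟩

theorem card_commutator :
    Nat.card (commutator (HrP p S)) = Nat.card (S ⧸ Ideal.span {(p : S)}) := by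
  let f : Multiplicative S →* HrP p S := (QuotientGroup.mk' (pCenter p S)).comp
    { toFun := fun z ↦ ⟨0, 0, z.toAdd⟩
      map_one' := rfl
      map_mul' := fun z w ↦ by ext <;> simp }
  have hrange : f.range = Ksub p S := by
    ext g
    constructor
    · rintro ⟨z, rfl⟩
      exact ⟨_, ⟨rfl, rfl⟩, rfl⟩
    · rintro ⟨a, ⟨hx, hy⟩, rfl⟩
      exact ⟨.ofAdd a.z, congrArg (QuotientGroup.mk' _) (Heis.ext hx.symm hy.symm rfl)⟩
  have hker : f.ker = (Ideal.span {(p : S)}).toAddSubgroup.toSubgroup := by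
    ext z
    exact (QuotientGroup.eq_one_iff _).trans Heis.mk_zero_zero_mem_pCenter
  rw [commutator_eq_Ksub, ← hrange, ← Subgroup.index_ker, hker]
  rfl

theorem index_center :
    (Subgroup.center (HrP p S)).index = Nat.card (S ⧸ Ideal.span {(p : S)}) ^ 2 := by
  let I := Ideal.span {(p : S)}
  let f : Heis S →* Multiplicative ((S ⧸ I) × (S ⧸ I)) :=
    { toFun := fun a ↦ .ofAdd (Ideal.Quotient.mk I a.x, Ideal.Quotient.mk I a.y)
      map_one' := rfl
      map_mul' := fun a b ↦ rfl }
  have hf : Function.Surjective f := by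
    rintro ⟨x, y⟩
    obtain ⟨x, rfl⟩ := Ideal.Quotient.mk_surjective x
    obtain ⟨y, rfl⟩ := Ideal.Quotient.mk_surjective y
    exact ⟨⟨x, y, 0⟩, rfl⟩
  have hker : (Subgroup.center (HrP p S)).comap (QuotientGroup.mk' (pCenter p S)) = f.ker := by
    ext a
    refine mk_mem_center_iff.trans ?_
    rw [← Ideal.Quotient.eq_zero_iff_mem, ← Ideal.Quotient.eq_zero_iff_mem]
    exact Prod.mk_eq_zero.symm
  rw [← Subgroup.index_comap_of_surjective _ (QuotientGroup.mk'_surjective (pCenter p S)), hker,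
    Subgroup.index_ker, f.range_eq_top.2 hf, Subgroup.card_top]
  exact (Nat.card_prod _ _).trans (sq _).symm

end HrP

theorem card_zmod_quotient_span_natCast {m d : ℕ} (hdm : d ∣ m) :
    Nat.card (ZMod m ⧸ Ideal.span {(d : ZMod m)}) = d := by
  have hker : RingHom.ker (ZMod.castHom hdm (ZMod d)) = Ideal.span {(d : ZMod m)} := by
    refine le_antisymm (fun z hz ↦ ?_) ?_
    · obtain ⟨a, rfl⟩ := ZMod.intCast_surjective z
      rw [RingHom.mem_ker, map_intCast, ZMod.intCast_zmod_eq_zero_iff_dvd] at hz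
      exact Ideal.mem_span_singleton.2 (by simpa using map_dvd (Int.castRingHom (ZMod m)) hz)
    · rw [Ideal.span_singleton_le_iff_mem, RingHom.mem_ker, map_natCast, ZMod.natCast_self]
  rw [← hker, Nat.card_congr (RingHom.quotientKerEquivOfSurjective
    (ZMod.castHom_surjective hdm)).toEquiv, Nat.card_zmod]

open scoped MonoidAlgebra in
theorem HrP_ZModPow_amenability_constant_general {k S ι : Type*} [Field k] [IsAlgClosed k]
    [CharZero k] [CommRing S] [Finite S] [Fintype ι] {p q : ℕ} (hq : q.Prime)
    (hcard : Nat.card (S ⧸ Ideal.span {(p : S)}) = q) {V : ι → Type*} [∀ i, AddCommGroup (V i)]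
    [∀ i, Module k[HrP p S] (V i)] [∀ i, Module k (V i)] [∀ i, IsScalarTower k k[HrP p S] (V i)]
    (hV : IsCompleteSimpleFamily k[HrP p S] V) :
    (1 / Nat.card (HrP p S) : ℚ) * ∑ i, (Module.finrank k (V i) : ℚ) ^ 3 = q - 1 + 1 / q := by
  have hcomm : Nat.card (commutator (HrP p S)) = q := by rw [HrP.card_commutator, hcard]
  rw [hV.sum_finrank_pow_three (HrP.commutator_le_center p S) (by rwa [hcomm])
    (by rw [HrP.index_center, hcard]), hcomm]
  have hq0 : (q : ℚ) ≠ 0 := Nat.cast_ne_zero.2 hq.ne_zero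
  field_simp
  ring

/-- For `G = Hr_p(ℤ/p^nℤ)` (`n ≥ 1`) and any complete set `(V i)_{i : ι}` of
pairwise non-isomorphic irreducible complex representations of `G`,
`(1/|G|) · Σ_i (dim V i)³ = p − 1 + 1/p` as rational numbers. -/
theorem HrP_ZModPow_amenability_constant
    (p : ℕ) (hp : p.Prime) (n : ℕ) (hn : 1 ≤ n)
    (ι : Type*) [Fintype ι]
    (V : ι → Type*) [∀ i, AddCommGroup (V i)]
    [∀ i, Module (MonoidAlgebra ℂ (HrP p (ZMod (p ^ n)))) (V i)]
    [∀ i, Module ℂ (V i)]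
    [∀ i, IsScalarTower ℂ (MonoidAlgebra ℂ (HrP p (ZMod (p ^ n)))) (V i)]
    (hsimple : ∀ i, IsSimpleModule (MonoidAlgebra ℂ (HrP p (ZMod (p ^ n)))) (V i))
    (hfd : ∀ i, FiniteDimensional ℂ (V i))
    (hpairwise : ∀ i j : ι,
      Nonempty (V i ≃ₗ[MonoidAlgebra ℂ (HrP p (ZMod (p ^ n)))] V j) → i = j)
    (hcomplete : ∀ (W : Type) [AddCommGroup W]
      [Module (MonoidAlgebra ℂ (HrP p (ZMod (p ^ n)))) W]
      [Module ℂ W] [IsScalarTower ℂ (MonoidAlgebra ℂ (HrP p (ZMod (p ^ n)))) W],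
      IsSimpleModule (MonoidAlgebra ℂ (HrP p (ZMod (p ^ n)))) W → FiniteDimensional ℂ W →
        ∃ i : ι, Nonempty (W ≃ₗ[MonoidAlgebra ℂ (HrP p (ZMod (p ^ n)))] V i)) :
    (1 / (Nat.card (HrP p (ZMod (p ^ n))) : ℚ)) *
        ∑ i : ι, (Module.finrank ℂ (V i) : ℚ) ^ 3 =
      (p : ℚ) - 1 + 1 / (p : ℚ) := by
  have : NeZero (p ^ n) := ⟨pow_ne_zero n hp.ne_zero⟩
  exact HrP_ZModPow_amenability_constant_general hp
    (card_zmod_quotient_span_natCast (dvd_pow_self p (Nat.one_le_iff_ne_zero.1 hn)))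
    ⟨hsimple, hpairwise, fun I hI ↦ hcomplete I hI inferInstance⟩
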